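/- Let ℛ = (𝒜^{(0)}, (ℬ^{(n)})_{n≥1}) be a renormalization scheme of dimension d ≥ 2 associated to (λ₀,μ,σ), and assume Condition (C1) holds. Let n ≥ m ≥ 1 be integers and let γ = (u₁,…,u_k) be a nearest-neighbor path of points of 𝕃_m (i.e. ‖u_i − u_{i+1}‖₁ = λ_m for 1 ≤ i ≤ k−1) all of which are good up to scale n. Then there exists a nearest-neighbor path γ̃ = (v₁,…,v_l) of points of 𝕃_{m−1} such that v₁ ∈ Λ_m(u₁), v_l ∈ Λ_m(u_k), and every v_i is good up to scale n. -/

import Mathlib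

/-!
Divide the lattices by their mesh, so that `𝕃_{m-1}` becomes `ℤ^d` and the boxes `Λ_m(u)` become
the blocks `M w + [0, M)^d` with `M = μ_{m-1}`. If `u` is good, two bad points of its block are at
sup-norm distance less than `r = 5 σ_{m-1}`, so every point of the block with *some* coordinate at
distance at least `r` from that of a fixed center `a` is good. As `d ≥ 2`, any such point can be
joined to a point *all* of whose coordinates are far from those of `a`: move the other coordinates
first, then the remaining one. Two adjacent blocks with centers `a` and `b` are linked across their
common face along a line whose other coordinates are far from both `a` and `b`; such coordinates
exist because `M > 4 r`.
-/

open MeasureTheory ProbabilityTheory Set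

noncomputable section

/-- The scale sequence `λ_0 = lam0`, `λ_{n+1} = λ_n μ_n`. -/
def lamSeq (lam0 : ℕ) (μ : ℕ → ℕ) : ℕ → ℕ
  | 0 => lam0
  | n + 1 => lamSeq lam0 μ n * μ n

/-- The lattice `𝕃 = L ℤ^d` inside `ℤ^d`. -/
def latt (d L : ℕ) : Set (Fin d → ℤ) := {u | ∀ i, (L : ℤ) ∣ u i}

/-- Sup norm on `ℤ^d`. -/
def normInfV {d : ℕ} (v : Fin d → ℤ) : ℕ := Finset.univ.sup fun i => (v i).natAbs

/-- ℓ¹ norm on `ℤ^d`. -/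
def norm1V {d : ℕ} (v : Fin d → ℤ) : ℕ := ∑ i, (v i).natAbs

/-- `Λ_n(u) = (u + [0, λ_n)^d) ∩ 𝕃_{n-1}`. -/
def lamBox {d : ℕ} (lam0 : ℕ) (μ : ℕ → ℕ) (n : ℕ) (u : Fin d → ℤ) : Set (Fin d → ℤ) :=
  {v | v ∈ latt d (lamSeq lam0 μ (n - 1)) ∧
    ∀ i, u i ≤ v i ∧ v i < u i + (lamSeq lam0 μ n : ℤ)}

/-- A renormalization scheme: a collection of seed events (indexed by `𝕃₀`)
and of auxiliary events (indexed by `𝕃_n`, `n ≥ 1`). -/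
structure RenormScheme (Ω : Type*) (d : ℕ) where
  seed : (Fin d → ℤ) → Set Ω
  aux : ℕ → (Fin d → ℤ) → Set Ω

/-- The recursively defined events `𝒜^{(n)}_u` of a renormalization scheme. -/
def Aev {Ω : Type*} {d : ℕ} (lam0 : ℕ) (μ σ : ℕ → ℕ) (S : RenormScheme Ω d) :
    ℕ → (Fin d → ℤ) → Set Ω
  | 0, u => S.seed u
  | n + 1, u =>
    S.aux (n + 1) u ∩
      ⋂ (u₁ : Fin d → ℤ) (u₂ : Fin d → ℤ) (_ : u₁ ∈ lamBox lam0 μ (n + 1) u)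
        (_ : u₂ ∈ lamBox lam0 μ (n + 1) u)
        (_ : 5 * σ n * lamSeq lam0 μ n ≤ normInfV (u₁ - u₂)),
        (Aev lam0 μ σ S n u₁ ∪ Aev lam0 μ σ S n u₂)

/-- Condition (C1): `μ_n ≥ 100 σ_n` and `σ_n ≥ 2`. -/
def Cond1 (μ σ : ℕ → ℕ) : Prop := ∀ n, 100 * σ n ≤ μ n ∧ 2 ≤ σ n

/-- The unique point `w ∈ Lℤ^d` with `v ∈ w + [0, L)^d`. -/
def parentV {d : ℕ} (L : ℕ) (v : Fin d → ℤ) : Fin d → ℤ :=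
  fun i => (L : ℤ) * (Int.ediv (v i) (L : ℤ))

/-- The renormalization sequence of `u ∈ 𝕃_m`: `renSeq lam0 μ m u j ∈ 𝕃_{m+j}`. -/
def renSeq {d : ℕ} (lam0 : ℕ) (μ : ℕ → ℕ) (m : ℕ) (u : Fin d → ℤ) : ℕ → (Fin d → ℤ)
  | 0 => u
  | j + 1 => parentV (lamSeq lam0 μ (m + j + 1)) (renSeq lam0 μ m u j)

/-- The event that `u ∈ 𝕃_m` is good up to scale `n`. -/
def GoodUpTo {Ω : Type*} {d : ℕ} (lam0 : ℕ) (μ σ : ℕ → ℕ) (S : RenormScheme Ω d)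
    (m n : ℕ) (u : Fin d → ℤ) : Set Ω :=
  ⋂ k ∈ Finset.Icc m n, Aev lam0 μ σ S k (renSeq lam0 μ m u (k - m))

/-- The box `u + [-r, r]^d ⊆ ℝ^d` (formal support of seed and auxiliary events). -/
def suppBox {d : ℕ} (u : Fin d → ℤ) (r : ℕ) : Set (Fin d → ℝ) :=
  {x | ∀ i, |x i - (u i : ℝ)| ≤ (r : ℝ)}

/-- The sub-collection of seed and auxiliary events whose formal support is contained
in `D`. -/
def schemeEventsIn {Ω : Type*} {d : ℕ} (lam0 : ℕ) (μ σ : ℕ → ℕ) (S : RenormScheme Ω d)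
    (D : Set (Fin d → ℝ)) : Set (Set Ω) :=
  {E | (∃ u ∈ latt d (lamSeq lam0 μ 0), E = S.seed u ∧
          suppBox u (σ 0 * lamSeq lam0 μ 0) ⊆ D) ∨
       (∃ n : ℕ, 1 ≤ n ∧ ∃ u ∈ latt d (lamSeq lam0 μ n), E = S.aux n u ∧
          suppBox u (σ n * lamSeq lam0 μ n) ⊆ D)}

/-- Condition (C2): collections of seed/auxiliary events with disjoint formal supports
are independent. -/
def Cond2 {Ω : Type*} [MeasureSpace Ω] {d : ℕ} (lam0 : ℕ) (μ σ : ℕ → ℕ)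
    (S : RenormScheme Ω d) : Prop :=
  ∀ D₁ D₂ : Set (Fin d → ℝ), Disjoint D₁ D₂ →
    ProbabilityTheory.Indep
      (MeasurableSpace.generateFrom (schemeEventsIn lam0 μ σ S D₁))
      (MeasurableSpace.generateFrom (schemeEventsIn lam0 μ σ S D₂)) ℙ

section Grid

variable {ι : Type*}

/-- `x` and `y` are the endpoints of a nearest-neighbor path of `ℤ^ι` staying in `A`. The
nearest-neighbor graph is encoded as the Hasse diagram of the product order. -/
def GridJoinedIn (A : Set (ι → ℤ)) (x y : ι → ℤ) : Prop :=
  ∃ w : (SimpleGraph.hasse (ι → ℤ)).Walk x y, ∀ z ∈ w.support, z ∈ A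

namespace GridJoinedIn

variable {A : Set (ι → ℤ)} {x y z : ι → ℤ}

lemma refl (hx : x ∈ A) : GridJoinedIn A x x :=
  ⟨.nil, by simpa using hx⟩

lemma symm : GridJoinedIn A x y → GridJoinedIn A y x := fun ⟨w, hw⟩ =>
  ⟨w.reverse, by simpa using hw⟩

lemma trans : GridJoinedIn A x y → GridJoinedIn A y z → GridJoinedIn A x z :=
  fun ⟨w, hw⟩ ⟨w', hw'⟩ =>
    ⟨w.append w', fun _ hp => ((w.mem_support_append_iff w').1 hp).elim (hw _) (hw' _)⟩

lemma of_adj (h : (SimpleGraph.hasse (ι → ℤ)).Adj x y) (hx : x ∈ A) (hy : y ∈ A) :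
    GridJoinedIn A x y :=
  ⟨h.toWalk, by simp [hx, hy]⟩

end GridJoinedIn

lemma gridJoinedIn_iff_exists_fin {A : Set (ι → ℤ)} {x y : ι → ℤ} :
    GridJoinedIn A x y ↔ ∃ l : ℕ, ∃ hl : 1 ≤ l, ∃ g : Fin l → ι → ℤ,
      g ⟨0, by omega⟩ = x ∧ g ⟨l - 1, by omega⟩ = y ∧
      (∀ (j : ℕ) (h : j + 1 < l),
        (SimpleGraph.hasse (ι → ℤ)).Adj (g ⟨j, by omega⟩) (g ⟨j + 1, h⟩)) ∧
      ∀ j, g j ∈ A := by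
  constructor
  · rintro ⟨w, hw⟩
    exact ⟨w.length + 1, by omega, fun j => w.getVert j, w.getVert_zero, w.getVert_length,
      fun _ h => w.adj_getVert_succ (Nat.lt_of_succ_lt_succ h),
      fun j => hw _ (w.getVert_mem_support j)⟩
  · rintro ⟨l, hl, g, rfl, rfl, hadj, hA⟩
    have joined : ∀ (j : ℕ) (h : j < l), GridJoinedIn A (g ⟨0, by omega⟩) (g ⟨j, h⟩) := by
      intro j
      induction j with
      | zero => exact fun _ => .refl (hA _)
      | succ j ih => exact fun h => (ih (by omega)).trans (.of_adj (hadj j h) (hA _) (hA _))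
    exact joined (l - 1) (by omega)

section Boxes

variable [Finite ι] {A : Set (ι → ℤ)} {x y : ι → ℤ}

lemma GridJoinedIn.of_Icc_subset (hxy : x ≤ y) (hA : Icc x y ⊆ A) : GridJoinedIn A x y := by
  classical
  have := Fintype.ofFinite ι
  induction le_iff_reflTransGen_covBy.1 hxy with
  | refl => exact .refl (hA ⟨le_rfl, le_rfl⟩)
  | @tail b c hxb hbc ih =>
    have hxb : x ≤ b := le_iff_reflTransGen_covBy.2 hxb
    exact (ih hxb ((Icc_subset_Icc_right hbc.le).trans hA)).trans
      (.of_adj (.inl hbc) (hA ⟨hxb, hbc.le⟩) (hA ⟨hxy, le_rfl⟩))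

lemma GridJoinedIn.of_uIcc_subset (hA : uIcc x y ⊆ A) : GridJoinedIn A x y :=
  have down : GridJoinedIn A (x ⊓ y) x :=
    .of_Icc_subset inf_le_left ((Icc_subset_Icc_right le_sup_left).trans hA)
  have up : GridJoinedIn A (x ⊓ y) y :=
    .of_Icc_subset inf_le_right ((Icc_subset_Icc_right le_sup_right).trans hA)
  down.symm.trans up

lemma GridJoinedIn.of_Icc_inter_slice_subset {lo hi : ι → ℤ} {i : ι} (hx : x ∈ Icc lo hi)
    (hy : y ∈ Icc lo hi) (hxy : x i = y i) (hA : Icc lo hi ∩ {z | z i = x i} ⊆ A) :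
    GridJoinedIn A x y := by
  refine .of_uIcc_subset fun z hz => hA ⟨uIcc_subset_Icc hx hy hz, ?_⟩
  rw [← pi_univ_uIcc] at hz
  simpa [hxy] using hz i (mem_univ i)

end Boxes

/-- The points at sup-norm distance at least `r` from `a`, i.e. those having some coordinate at
distance at least `r` from the corresponding coordinate of `a`. -/
def farFrom (a : ι → ℤ) (r : ℕ) : Set (ι → ℤ) :=
  {z | ∃ i, r ≤ (z i - a i).natAbs}

/-- The points each of whose coordinates is at distance at least `r` from the corresponding
coordinate of `a`; they serve as hubs to which all of `farFrom a r` connects. -/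
def coordwiseFarFrom (a : ι → ℤ) (r : ℕ) : Set (ι → ℤ) :=
  {z | ∀ i, r ≤ (z i - a i).natAbs}

lemma coordwiseFarFrom_subset_farFrom [Nonempty ι] (a : ι → ℤ) (r : ℕ) :
    coordwiseFarFrom a r ⊆ farFrom a r :=
  fun _ hz => ⟨Classical.arbitrary ι, hz _⟩

/- First move `x` to `update t i (x i)` keeping the far coordinate `x i`, and only then move the
`i`-th coordinate, while another far coordinate of `t` is kept. -/
lemma GridJoinedIn.of_Icc_inter_farFrom_subset [Finite ι] [Nontrivial ι] {A : Set (ι → ℤ)}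
    {a lo hi x t : ι → ℤ} {r : ℕ} (hA : Icc lo hi ∩ farFrom a r ⊆ A)
    (hx : x ∈ Icc lo hi ∩ farFrom a r) (ht : t ∈ Icc lo hi ∩ coordwiseFarFrom a r) :
    GridJoinedIn A x t := by
  classical
  obtain ⟨hx, i, hxi⟩ := hx
  obtain ⟨ht, hta⟩ := ht
  obtain ⟨j, hji⟩ := exists_ne i
  have hmid : Function.update t i (x i) ∈ Icc lo hi :=
    ⟨le_update_iff.2 ⟨hx.1 i, fun k _ => ht.1 k⟩, update_le_iff.2 ⟨hx.2 i, fun k _ => ht.2 k⟩⟩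
  have keep_i : GridJoinedIn A x (Function.update t i (x i)) :=
    .of_Icc_inter_slice_subset (i := i) hx hmid (by simp) fun z hz => hA ⟨hz.1, i, by rwa [hz.2]⟩
  have keep_j : GridJoinedIn A t (Function.update t i (x i)) :=
    .of_Icc_inter_slice_subset (i := j) ht hmid (by simp [hji])
      fun z hz => hA ⟨hz.1, j, by rw [hz.2]; exact hta j⟩
  exact keep_i.trans keep_j.symm

/- Each of `a` and `b` is at distance less than `r` from at most one of `lo`, `lo + 2 r` and
`lo + 4 r`. -/
lemma exists_mem_Icc_forall_far {lo hi : ℤ} {r : ℕ} (h : lo + 4 * r ≤ hi) (a b : ℤ) :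
    ∃ c ∈ Icc lo hi, r ≤ (c - a).natAbs ∧ r ≤ (c - b).natAbs := by
  by_contra! hc
  have h₀ := hc lo ⟨by omega, by omega⟩
  have h₁ := hc (lo + 2 * r) ⟨by omega, by omega⟩
  have h₂ := hc (lo + 4 * r) ⟨by omega, by omega⟩
  omega

/-- The block `M u + [0, M)^ι` of the coarse site `u`. -/
def block (M : ℕ) (u : ι → ℤ) : Set (ι → ℤ) :=
  Icc (fun i => M * u i) (fun i => M * u i + (M - 1))

/-- The coarse sites `u` whose block of side `M` lies in `A`, except possibly for points within
sup-norm distance less than `r` of a single center. -/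
def nearlyFilled (M r : ℕ) (A : Set (ι → ℤ)) : Set (ι → ℤ) :=
  {u | ∃ a, block M u ∩ farFrom a r ⊆ A}

section Blocks

variable {M r : ℕ} {u v : ι → ℤ}

lemma exists_block_coordwiseFarFrom (hM : 4 * r < M) (u a b : ι → ℤ) :
    ∃ c ∈ block M u, c ∈ coordwiseFarFrom a r ∧ c ∈ coordwiseFarFrom b r := by
  choose c hc hca hcb using fun i =>
    exists_mem_Icc_forall_far (lo := M * u i) (hi := M * u i + (M - 1)) (r := r) (by omega)
      (a i) (b i)
  exact ⟨c, ⟨fun i => (hc i).1, fun i => (hc i).2⟩, hca, hcb⟩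

lemma exists_block_covBy_block [Nontrivial ι] (hM : 4 * r < M) (huv : u ⋖ v) (a b : ι → ℤ) :
    ∃ p ∈ block M u ∩ farFrom a r, ∃ q ∈ block M v ∩ farFrom b r, p ⋖ q := by
  classical
  obtain ⟨j, huvj, huv⟩ := Pi.covBy_iff.1 huv
  rw [Order.covBy_iff_add_one_eq] at huvj
  obtain ⟨c, hcu, hca, hcb⟩ := exists_block_coordwiseFarFrom hM u a b
  obtain ⟨i, hij⟩ := exists_ne j
  refine ⟨Function.update c j (M * u j + (M - 1)), ⟨⟨?_, ?_⟩, i, ?_⟩,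
    Function.update c j (M * v j), ⟨⟨?_, ?_⟩, i, ?_⟩, ?_⟩
  · exact le_update_iff.2 ⟨by omega, fun k _ => hcu.1 k⟩
  · exact update_le_iff.2 ⟨by omega, fun k _ => hcu.2 k⟩
  · simpa [hij] using hca i
  · exact le_update_iff.2 ⟨by omega, fun k hk => by simpa [huv k hk] using hcu.1 k⟩
  · exact update_le_iff.2 ⟨by omega, fun k hk => by simpa [huv k hk] using hcu.2 k⟩
  · simpa [hij] using hcb i
  · refine Pi.covBy_iff.2 ⟨j, ?_, fun k hk => by simp [hk]⟩
    rw [Order.covBy_iff_add_one_eq, Function.update_self, Function.update_self, ← huvj]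
    ring

variable [Finite ι] [Nontrivial ι] {A : Set (ι → ℤ)} {a b x y : ι → ℤ}

lemma GridJoinedIn.of_blocks_covBy (hM : 4 * r < M) (huv : u ⋖ v)
    (ha : block M u ∩ farFrom a r ⊆ A) (hb : block M v ∩ farFrom b r ⊆ A)
    (hx : x ∈ block M u ∩ coordwiseFarFrom a r) (hy : y ∈ block M v ∩ coordwiseFarFrom b r) :
    GridJoinedIn A x y := by
  obtain ⟨p, hp, q, hq, hpq⟩ := exists_block_covBy_block hM huv a b
  have hxp : GridJoinedIn A p x := .of_Icc_inter_farFrom_subset ha hp hx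
  have hqy : GridJoinedIn A q y := .of_Icc_inter_farFrom_subset hb hq hy
  exact hxp.symm.trans ((of_adj (.inl hpq) (ha hp) (hb hq)).trans hqy)

lemma GridJoinedIn.of_blocks_adj (hM : 4 * r < M) (huv : (SimpleGraph.hasse (ι → ℤ)).Adj u v)
    (ha : block M u ∩ farFrom a r ⊆ A) (hb : block M v ∩ farFrom b r ⊆ A)
    (hx : x ∈ block M u ∩ coordwiseFarFrom a r) (hy : y ∈ block M v ∩ coordwiseFarFrom b r) :
    GridJoinedIn A x y :=
  huv.elim (fun h => of_blocks_covBy hM h ha hb hx hy)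
    fun h => (of_blocks_covBy hM h hb ha hy hx).symm

theorem GridJoinedIn.exists_block_of_nearlyFilled (hM : 4 * r < M)
    (h : GridJoinedIn (nearlyFilled M r A) u v) :
    ∃ x ∈ block M u, ∃ y ∈ block M v, GridJoinedIn A x y := by
  obtain ⟨w, hw⟩ := h
  have lift : ∀ a, block M u ∩ farFrom a r ⊆ A → ∀ x ∈ block M u ∩ coordwiseFarFrom a r,
      ∃ y ∈ block M v, GridJoinedIn A x y := by
    induction w with
    | nil => exact fun a ha x hx =>
        ⟨x, hx.1, .refl (ha ⟨hx.1, coordwiseFarFrom_subset_farFrom a r hx.2⟩)⟩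
    | @cons u u' v huu' w ih =>
      intro a ha x hx
      have hw' : ∀ z ∈ w.support, z ∈ nearlyFilled M r A := fun z hz => hw z (by simp [hz])
      obtain ⟨a', ha'⟩ := hw' u' w.start_mem_support
      obtain ⟨x', hx', hxa', -⟩ := exists_block_coordwiseFarFrom hM u' a' a'
      obtain ⟨y, hy, hxy⟩ := ih hw' a' ha' x' ⟨hx', hxa'⟩
      exact ⟨y, hy, (of_blocks_adj hM huu' ha ha' hx ⟨hx', hxa'⟩).trans hxy⟩
  obtain ⟨a, ha⟩ := hw u w.start_mem_support
  obtain ⟨x, hx, hxa, -⟩ := exists_block_coordwiseFarFrom hM u a a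
  exact ⟨x, hx, lift a ha x ⟨hx, hxa⟩⟩

end Blocks

end Grid

section Norms

variable {d : ℕ}

lemma natAbs_le_normInfV (v : Fin d → ℤ) (i : Fin d) : (v i).natAbs ≤ normInfV v :=
  Finset.le_sup (f := fun i => (v i).natAbs) (Finset.mem_univ i)

lemma le_normInfV_smul_sub_smul {z w : Fin d → ℤ} {r : ℕ} (L : ℕ) (hz : z ∈ farFrom w r) :
    r * L ≤ normInfV ((L : ℤ) • z - (L : ℤ) • w) := by
  obtain ⟨i, hi⟩ := hz
  calc r * L ≤ (z i - w i).natAbs * L := by gcongr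
    _ = (((L : ℤ) • z - (L : ℤ) • w) i).natAbs := by
      rw [← smul_sub, Pi.smul_apply, smul_eq_mul, Int.natAbs_mul, Int.natAbs_natCast, mul_comm,
        Pi.sub_apply]
    _ ≤ normInfV ((L : ℤ) • z - (L : ℤ) • w) := natAbs_le_normInfV _ i

lemma norm1V_smul (c : ℤ) (v : Fin d → ℤ) : norm1V (c • v) = c.natAbs * norm1V v := by
  simp only [norm1V, Pi.smul_apply, smul_eq_mul, Int.natAbs_mul, Finset.mul_sum]

lemma norm1V_eq_one_iff {v : Fin d → ℤ} :
    norm1V v = 1 ↔ ∃ j, (v j).natAbs = 1 ∧ ∀ i ≠ j, v i = 0 := by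
  constructor
  · intro h
    obtain ⟨j, -, hj⟩ := Finset.exists_ne_zero_of_sum_ne_zero (h.trans_ne one_ne_zero)
    rw [norm1V, ← Finset.add_sum_erase _ _ (Finset.mem_univ j)] at h
    have hrest : ∑ i ∈ Finset.univ.erase j, (v i).natAbs = 0 := by omega
    refine ⟨j, by omega, fun i hi => ?_⟩
    simpa using Finset.sum_eq_zero_iff.1 hrest i (by simp [hi])
  · rintro ⟨j, hj, h⟩
    rw [norm1V, Finset.sum_eq_single j (fun i _ hi => by simp [h i hi]) (by simp), hj]

lemma hasse_adj_iff_norm1V_sub {x y : Fin d → ℤ} :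
    (SimpleGraph.hasse (Fin d → ℤ)).Adj x y ↔ norm1V (x - y) = 1 := by
  simp only [SimpleGraph.hasse_adj, Pi.covBy_iff, Order.covBy_iff_add_one_eq, norm1V_eq_one_iff,
    Pi.sub_apply, ← exists_or]
  refine exists_congr fun j => ?_
  simp only [eq_comm (a := y _) (b := x _), ← or_and_right, sub_eq_zero]
  exact and_congr_left' (by omega)

lemma norm1V_smul_sub_smul_eq_iff {L : ℕ} (hL : 0 < L) {x y : Fin d → ℤ} :
    norm1V ((L : ℤ) • x - (L : ℤ) • y) = L ↔ (SimpleGraph.hasse (Fin d → ℤ)).Adj x y := by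
  rw [← smul_sub, norm1V_smul, Int.natAbs_natCast, hasse_adj_iff_norm1V_sub,
    Nat.mul_eq_left hL.ne']

lemma mem_latt_iff {L : ℕ} {u : Fin d → ℤ} : u ∈ latt d L ↔ ∃ w : Fin d → ℤ, u = (L : ℤ) • w := by
  constructor
  · intro h
    choose w hw using h
    exact ⟨w, funext hw⟩
  · rintro ⟨w, rfl⟩ i
    exact dvd_mul_right _ _

end Norms

lemma lamSeq_pos {lam0 : ℕ} {μ : ℕ → ℕ} (h0 : 0 < lam0) (hμ : ∀ n, 0 < μ n) :
    ∀ n, 0 < lamSeq lam0 μ n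
  | 0 => h0
  | n + 1 => Nat.mul_pos (lamSeq_pos h0 hμ n) (hμ n)

section Scheme

variable {Ω : Type*} {d : ℕ} {lam0 : ℕ} {μ σ : ℕ → ℕ} {S : RenormScheme Ω d} {m n : ℕ}
  {u v w z : Fin d → ℤ} {ω : Ω}

lemma smul_mem_lamBox (hL : 0 < lamSeq lam0 μ m) (hz : z ∈ block (μ m) w) :
    (lamSeq lam0 μ m : ℤ) • z ∈
      lamBox lam0 μ (m + 1) ((lamSeq lam0 μ (m + 1) : ℤ) • w) := by
  refine ⟨mem_latt_iff.2 ⟨z, rfl⟩, fun i => ?_⟩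
  have hlo : μ m * w i ≤ z i := hz.1 i
  have hhi : z i < μ m * w i + μ m := by linarith [hz.2 i]
  simp only [lamSeq, Nat.cast_mul, Pi.smul_apply, smul_eq_mul, mul_assoc, ← mul_add]
  exact ⟨by gcongr, by gcongr⟩

lemma parentV_of_mem_lamBox (hu : u ∈ latt d (lamSeq lam0 μ m)) (hv : v ∈ lamBox lam0 μ m u) :
    parentV (lamSeq lam0 μ m) v = u := by
  funext i
  obtain ⟨c, hc⟩ := hu i
  obtain ⟨hlo, hhi⟩ := hv.2 i
  have hdiv : v i / (lamSeq lam0 μ m : ℤ) = c := by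
    rw [Int.ediv_eq_iff_of_pos (by omega)]
    constructor <;> linarith
  rw [hc, ← hdiv]
  rfl

lemma renSeq_succ_of_mem_lamBox (hu : u ∈ latt d (lamSeq lam0 μ (m + 1)))
    (hv : v ∈ lamBox lam0 μ (m + 1) u) (j : ℕ) :
    renSeq lam0 μ m v (j + 1) = renSeq lam0 μ (m + 1) u j := by
  induction j with
  | zero => exact parentV_of_mem_lamBox hu hv
  | succ j ih => rw [renSeq, ih, renSeq, Nat.add_right_comm m 1 j, ← Nat.add_assoc]

lemma mem_goodUpTo_iff :
    ω ∈ GoodUpTo lam0 μ σ S m n u ↔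
      ∀ k, m ≤ k → k ≤ n → ω ∈ Aev lam0 μ σ S k (renSeq lam0 μ m u (k - m)) := by
  simp only [GoodUpTo, mem_iInter, Finset.mem_Icc, and_imp]

lemma mem_Aev_of_mem_goodUpTo (hmn : m ≤ n) (h : ω ∈ GoodUpTo lam0 μ σ S m n u) :
    ω ∈ Aev lam0 μ σ S m u := by
  simpa only [Nat.sub_self, renSeq] using mem_goodUpTo_iff.1 h m le_rfl hmn

lemma mem_goodUpTo_of_mem_lamBox (hu : u ∈ latt d (lamSeq lam0 μ (m + 1)))
    (hgood : ω ∈ GoodUpTo lam0 μ σ S (m + 1) n u) (hv : v ∈ lamBox lam0 μ (m + 1) u)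
    (hA : ω ∈ Aev lam0 μ σ S m v) : ω ∈ GoodUpTo lam0 μ σ S m n v := by
  refine mem_goodUpTo_iff.2 fun k hmk hkn => ?_
  obtain rfl | hmk := hmk.eq_or_lt
  · simpa only [Nat.sub_self, renSeq] using hA
  · rw [show k - m = k - (m + 1) + 1 by omega, renSeq_succ_of_mem_lamBox hu hv]
    exact mem_goodUpTo_iff.1 hgood k hmk hkn

lemma mem_Aev_or_mem_Aev_of_far (h : ω ∈ Aev lam0 μ σ S (m + 1) u)
    (hv : v ∈ lamBox lam0 μ (m + 1) u) (hw : w ∈ lamBox lam0 μ (m + 1) u)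
    (hvw : 5 * σ m * lamSeq lam0 μ m ≤ normInfV (v - w)) :
    ω ∈ Aev lam0 μ σ S m v ∨ ω ∈ Aev lam0 μ σ S m w := by
  simp only [Aev, mem_inter_iff, mem_iInter] at h
  exact h.2 v w hv hw hvw

/- Any bad point of the box can serve as the center: by definition of `𝒜^{(m+1)}`, every point far
from it is good. -/
lemma mem_nearlyFilled_of_mem_goodUpTo (hL : 0 < lamSeq lam0 μ m) (hmn : m + 1 ≤ n)
    (hgood : ω ∈ GoodUpTo lam0 μ σ S (m + 1) n ((lamSeq lam0 μ (m + 1) : ℤ) • w)) :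
    w ∈ nearlyFilled (μ m) (5 * σ m)
      {z | ω ∈ GoodUpTo lam0 μ σ S m n ((lamSeq lam0 μ m : ℤ) • z)} := by
  have good_of_Aev : ∀ z ∈ block (μ m) w, ω ∈ Aev lam0 μ σ S m ((lamSeq lam0 μ m : ℤ) • z) →
      ω ∈ GoodUpTo lam0 μ σ S m n ((lamSeq lam0 μ m : ℤ) • z) := fun z hz =>
    mem_goodUpTo_of_mem_lamBox (mem_latt_iff.2 ⟨w, rfl⟩) hgood (smul_mem_lamBox hL hz)
  by_cases hbad : ∃ a ∈ block (μ m) w, ω ∉ Aev lam0 μ σ S m ((lamSeq lam0 μ m : ℤ) • a)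
  · obtain ⟨a, ha, hbad⟩ := hbad
    refine ⟨a, fun z ⟨hz, hza⟩ => good_of_Aev z hz ?_⟩
    exact (mem_Aev_or_mem_Aev_of_far (mem_Aev_of_mem_goodUpTo hmn hgood) (smul_mem_lamBox hL hz)
      (smul_mem_lamBox hL ha) (le_normInfV_smul_sub_smul _ hza)).resolve_right hbad
  · push Not at hbad
    exact ⟨0, fun z hz => good_of_Aev z hz.1 (hbad z hz.1)⟩

end Scheme

theorem stmt12_general {Ω : Type*} {d : ℕ} (hd : 2 ≤ d) {lam0 : ℕ} {μ σ : ℕ → ℕ} {m n : ℕ}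
    (hL : 0 < lamSeq lam0 μ (m + 1)) (hσμ : 20 * σ m < μ m) (S : RenormScheme Ω d)
    (hmn : m + 1 ≤ n) {k : ℕ} (hk : 1 ≤ k) (γ : Fin k → Fin d → ℤ)
    (hmem : ∀ i, γ i ∈ latt d (lamSeq lam0 μ (m + 1)))
    (hpath : ∀ (i : ℕ) (h : i + 1 < k),
      norm1V (γ ⟨i, by omega⟩ - γ ⟨i + 1, h⟩) = lamSeq lam0 μ (m + 1))
    {ω : Ω} (hgood : ∀ i, ω ∈ GoodUpTo lam0 μ σ S (m + 1) n (γ i)) :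
    ∃ l : ℕ, ∃ hl : 1 ≤ l, ∃ γ' : Fin l → Fin d → ℤ,
      γ' ⟨0, by omega⟩ ∈ lamBox lam0 μ (m + 1) (γ ⟨0, by omega⟩) ∧
      γ' ⟨l - 1, by omega⟩ ∈ lamBox lam0 μ (m + 1) (γ ⟨k - 1, by omega⟩) ∧
      (∀ (j : ℕ) (h : j + 1 < l),
        norm1V (γ' ⟨j, by omega⟩ - γ' ⟨j + 1, h⟩) = lamSeq lam0 μ m) ∧
      ∀ j, γ' j ∈ latt d (lamSeq lam0 μ m) ∧ ω ∈ GoodUpTo lam0 μ σ S m n (γ' j) := by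
  have : Nontrivial (Fin d) := Fin.nontrivial_iff_two_le.2 hd
  have hL' : 0 < lamSeq lam0 μ m := Nat.pos_of_mul_pos_right hL
  choose w hw using fun i => mem_latt_iff.1 (hmem i)
  obtain rfl : γ = fun i => (lamSeq lam0 μ (m + 1) : ℤ) • w i := funext hw
  obtain ⟨x, hx, y, hy, hxy⟩ := GridJoinedIn.exists_block_of_nearlyFilled (by omega)
    (gridJoinedIn_iff_exists_fin.2 ⟨k, hk, w, rfl, rfl,
      fun i h => (norm1V_smul_sub_smul_eq_iff hL).1 (hpath i h),
      fun i => mem_nearlyFilled_of_mem_goodUpTo hL' hmn (hgood i)⟩)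
  obtain ⟨l, hl, g, rfl, rfl, hadj, hg⟩ := gridJoinedIn_iff_exists_fin.1 hxy
  exact ⟨l, hl, fun j => (lamSeq lam0 μ m : ℤ) • g j, smul_mem_lamBox hL' hx,
    smul_mem_lamBox hL' hy, fun j h => (norm1V_smul_sub_smul_eq_iff hL').2 (hadj j h),
    fun j => ⟨mem_latt_iff.2 ⟨g j, rfl⟩, hg j⟩⟩

theorem stmt12 {Ω : Type*} (d : ℕ) (hd : 2 ≤ d) (lam0 : ℕ) (hlam0 : 0 < lam0)
    (μ σ : ℕ → ℕ) (hμ : ∀ n, 0 < μ n) (hσ : ∀ n, 0 < σ n) (hC1 : Cond1 μ σ)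
    (S : RenormScheme Ω d) (m n : ℕ) (hm : 1 ≤ m) (hmn : m ≤ n)
    (k : ℕ) (hk : 1 ≤ k) (γ : Fin k → Fin d → ℤ)
    (hmem : ∀ i, γ i ∈ latt d (lamSeq lam0 μ m))
    (hpath : ∀ (i : ℕ) (h : i + 1 < k),
      norm1V (γ ⟨i, by omega⟩ - γ ⟨i + 1, h⟩) = lamSeq lam0 μ m)
    (ω : Ω) (hgood : ∀ i, ω ∈ GoodUpTo lam0 μ σ S m n (γ i)) :
    ∃ l : ℕ, ∃ hl : 1 ≤ l, ∃ γ' : Fin l → Fin d → ℤ,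
      γ' ⟨0, by omega⟩ ∈ lamBox lam0 μ m (γ ⟨0, by omega⟩) ∧
      γ' ⟨l - 1, by omega⟩ ∈ lamBox lam0 μ m (γ ⟨k - 1, by omega⟩) ∧
      (∀ (j : ℕ) (h : j + 1 < l),
        norm1V (γ' ⟨j, by omega⟩ - γ' ⟨j + 1, h⟩) = lamSeq lam0 μ (m - 1)) ∧
      (∀ j : Fin l, ω ∈ GoodUpTo lam0 μ σ S (m - 1) n (γ' j)) := by
  obtain ⟨m, rfl⟩ := Nat.exists_eq_add_of_le' hm
  have hσμ : 20 * σ m < μ m := by linarith [hC1 m]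
  obtain ⟨l, hl, γ', h0, hlast, hadj, hγ'⟩ := stmt12_general hd (lamSeq_pos hlam0 hμ (m + 1)) hσμ
    S hmn hk γ hmem hpath hgood
  exact ⟨l, hl, γ', h0, hlast, hadj, fun j => (hγ' j).2⟩

end
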